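/- For every integer m, the cubic polynomial g_m(X) = X³ + 3X² − (m²+3m+6)X + 1 has discriminant (2m+3)²(m²+3m+9)², and its splitting field over ℚ equals L_m, the splitting field over ℚ of f_m(X) = X³ − mX² − (m+3)X − 1. -/

import Mathlib

open Polynomial

/-- The simplest cubic polynomial `f_m(X) = X³ − mX² − (m+3)X − 1` over `ℚ`. -/
noncomputable def f (m : ℤ) : ℚ[X] :=
  X ^ 3 - C (m : ℚ) * X ^ 2 - C ((m : ℚ) + 3) * X - 1

/-- The simplest cubic field `L_m`: the splitting field of `f_m` over `ℚ` inside a fixed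
algebraic closure of `ℚ`. -/
noncomputable def L (m : ℤ) : IntermediateField ℚ (AlgebraicClosure ℚ) :=
  IntermediateField.adjoin ℚ ((f m).rootSet (AlgebraicClosure ℚ))

/-- The cubic polynomial `g_m(X) = X³ + 3X² − (m²+3m+6)X + 1` over `ℚ`. -/
noncomputable def g (m : ℤ) : ℚ[X] :=
  X ^ 3 + C 3 * X ^ 2 - C ((m : ℚ) ^ 2 + 3 * (m : ℚ) + 6) * X + 1

/-!
The roots of `f_m` form a cycle `x ↦ y ↦ z ↦ x` under `t ↦ -1 / (1 + t)`, and the roots of `g_m`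
are the differences of consecutive members of this cycle, shifted by one: `y - z - 1`, `z - x - 1`
and `x - y - 1`. The differences of two roots of `g_m` are therefore, up to sign, `m - 3x`,
`m - 3y`, `m - 3z`, whose product is `27 f_m(m/3) = -(2m + 3)(m² + 3m + 9)`. Conversely
`3x = m + (x - y - 1) - (z - x - 1)`, and cyclically, so the two sets of roots generate the same
field as soon as `3` is invertible.
-/

section CommRing

variable {R S : Type*} [CommRing R] [CommRing S]

/-- Shanks's simplest cubic with its parameter in an arbitrary commutative ring; `f m` is the case
of an integer parameter in `ℚ`. -/
noncomputable def simplestCubic (a : R) : R[X] :=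
  X ^ 3 - C a * X ^ 2 - C (a + 3) * X - 1

/-- The cubic whose roots are the shifted differences of consecutive roots of `simplestCubic a`;
`g m` is the case of an integer parameter in `ℚ`. -/
noncomputable def differenceCubic (a : R) : R[X] :=
  X ^ 3 + C 3 * X ^ 2 - C (a ^ 2 + 3 * a + 6) * X + 1

theorem simplestCubic_map (φ : R →+* S) (a : R) :
    (simplestCubic a).map φ = simplestCubic (φ a) := by
  simp [simplestCubic, map_ofNat φ]

theorem differenceCubic_map (φ : R →+* S) (a : R) :
    (differenceCubic a).map φ = differenceCubic (φ a) := by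
  simp [differenceCubic, map_ofNat φ]

/-- The triple `(x, y, z)` has trace `a` and is a cycle of `t ↦ -1 / (1 + t)`. The cycle condition
is stated without division, so that it makes sense in every commutative ring. -/
structure IsShanksCycle (a x y z : R) : Prop where
  sum_eq : x + y + z = a
  next_fst : y * (1 + x) = -1
  next_snd : z * (1 + y) = -1
  next_thd : x * (1 + z) = -1

namespace IsShanksCycle

variable {a x y z : R}

theorem rotate (h : IsShanksCycle a x y z) : IsShanksCycle a y z x where
  sum_eq := (add_rotate x y z).symm.trans h.sum_eq
  next_fst := h.next_snd
  next_snd := h.next_thd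
  next_thd := h.next_fst

theorem sum_mul_eq (h : IsShanksCycle a x y z) : x * y + x * z + y * z = -(a + 3) := by
  linear_combination h.next_fst + h.next_snd + h.next_thd - h.sum_eq

theorem mul_eq_one (h : IsShanksCycle a x y z) : x * y * z = 1 := by
  linear_combination x * h.next_snd - h.next_thd

theorem simplestCubic_eq (h : IsShanksCycle a x y z) :
    simplestCubic a = (X - C x) * (X - C y) * (X - C z) := by
  rw [Cubic.prod_X_sub_C_eq, h.sum_eq, h.sum_mul_eq, h.mul_eq_one, simplestCubic, Cubic.toPoly]
  simp only [C_neg, C_1]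
  ring

theorem sub_sub_one_eq (h : IsShanksCycle a x y z) : y - z - 1 = -(y ^ 2 * z) := by
  linear_combination (y - 1) * h.next_snd

theorem differenceCubic_eq (h : IsShanksCycle a x y z) :
    differenceCubic a = (X - C (y - z - 1)) * (X - C (z - x - 1)) * (X - C (x - y - 1)) := by
  have sum_eq : (y - z - 1) + (z - x - 1) + (x - y - 1) = -3 := by ring
  have sum_mul_eq : (y - z - 1) * (z - x - 1) + (y - z - 1) * (x - y - 1) +
      (z - x - 1) * (x - y - 1) = -(a ^ 2 + 3 * a + 6) := by
    linear_combination 3 * h.sum_mul_eq - (x + y + z + a) * h.sum_eq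
  have mul_eq : (y - z - 1) * (z - x - 1) * (x - y - 1) = -1 := by
    calc (y - z - 1) * (z - x - 1) * (x - y - 1) = -(x * y * z) ^ 3 := by
          rw [h.sub_sub_one_eq, h.rotate.sub_sub_one_eq, h.rotate.rotate.sub_sub_one_eq]
          ring
      _ = -1 := by rw [h.mul_eq_one, one_pow]
  rw [Cubic.prod_X_sub_C_eq, sum_eq, sum_mul_eq, mul_eq, differenceCubic, Cubic.toPoly]
  simp only [C_neg, C_1, neg_neg]
  ring

theorem prod_sub_roots_differenceCubic (h : IsShanksCycle a x y z) :
    ((y - z - 1) - (z - x - 1)) * ((y - z - 1) - (x - y - 1)) * ((z - x - 1) - (x - y - 1)) =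
      (2 * a + 3) * (a ^ 2 + 3 * a + 9) := by
  have sub_fst_snd : (y - z - 1) - (z - x - 1) = a - 3 * z := by linear_combination h.sum_eq
  have sub_fst_thd : (y - z - 1) - (x - y - 1) = -(a - 3 * y) := by linear_combination -h.sum_eq
  have sub_snd_thd : (z - x - 1) - (x - y - 1) = a - 3 * x := by linear_combination h.sum_eq
  rw [sub_fst_snd, sub_fst_thd, sub_snd_thd]
  linear_combination 3 * a ^ 2 * h.sum_eq - 9 * a * h.sum_mul_eq + 27 * h.mul_eq_one

end IsShanksCycle

end CommRing

section Field

variable {F K : Type*} [Field F] [Field K] [Algebra F K]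

theorem exists_isShanksCycle_of_isRoot {a x : K} (hx : (simplestCubic a).IsRoot x) :
    ∃ y z, IsShanksCycle a x y z := by
  replace hx : x ^ 3 - a * x ^ 2 - (a + 3) * x - 1 = 0 := by
    simpa [simplestCubic] using hx
  have hx₀ : x ≠ 0 := by
    rintro rfl
    simp at hx
  have hx₁ : 1 + x ≠ 0 := fun h ↦ one_ne_zero (α := K) <| by
    linear_combination hx - (x ^ 2 - (a + 1) * x - 2) * h
  refine ⟨-1 / (1 + x), -(1 + x) / x, ?_, ?_, ?_, ?_⟩
  · field_simp
    linear_combination hx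
  · field_simp
  · field_simp
    ring
  · field_simp
    ring

theorem exists_isShanksCycle_of_splits {a : K} (h : (simplestCubic a).Splits) :
    ∃ x y z, IsShanksCycle a x y z := by
  have hdeg : (simplestCubic a).degree = 3 := by
    unfold simplestCubic
    compute_degree!
  obtain ⟨x, hx⟩ := h.exists_eval_eq_zero (by simp [hdeg])
  exact ⟨x, exists_isShanksCycle_of_isRoot hx⟩

theorem rootSet_eq_of_map_eq_X_sub_C_mul_three {p : F[X]} {x y z : K}
    (h : p.map (algebraMap F K) = (X - C x) * (X - C y) * (X - C z)) :
    p.rootSet K = {x, y, z} := by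
  have hp : p.map (algebraMap F K) ≠ 0 := by
    simp [h, X_sub_C_ne_zero]
  ext t
  rw [mem_rootSet', and_iff_right hp, ← eval_map_algebraMap, h]
  simp [sub_eq_zero, or_assoc]

namespace IsShanksCycle

variable {a : F} {x y z : K}

theorem rootSet_simplestCubic (h : IsShanksCycle (algebraMap F K a) x y z) :
    (simplestCubic a).rootSet K = {x, y, z} :=
  rootSet_eq_of_map_eq_X_sub_C_mul_three <| by rw [simplestCubic_map, h.simplestCubic_eq]

theorem rootSet_differenceCubic (h : IsShanksCycle (algebraMap F K a) x y z) :
    (differenceCubic a).rootSet K = {y - z - 1, z - x - 1, x - y - 1} :=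
  rootSet_eq_of_map_eq_X_sub_C_mul_three <| by rw [differenceCubic_map, h.differenceCubic_eq]

end IsShanksCycle

theorem mem_of_sum_eq_of_sub_mem {a : F} {x y z : K} (h : x + y + z = algebraMap F K a)
    (h3 : (3 : F) ≠ 0) {E : IntermediateField F K}
    (hzx : z - x - 1 ∈ E) (hxy : x - y - 1 ∈ E) : x ∈ E := by
  have three_mul : (3 : F) • x = algebraMap F K a + (x - y - 1) - (z - x - 1) := by
    rw [Algebra.smul_def, map_ofNat]
    linear_combination h
  rw [← inv_smul_smul₀ h3 x, three_mul]
  exact E.smul_mem (sub_mem (add_mem (E.algebraMap_mem a) hxy) hzx)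

theorem adjoin_sub_sub_one_eq {a : F} {x y z : K} (h : x + y + z = algebraMap F K a)
    (h3 : (3 : F) ≠ 0) :
    IntermediateField.adjoin F {y - z - 1, z - x - 1, x - y - 1} =
      IntermediateField.adjoin F {x, y, z} := by
  apply le_antisymm <;>
    simp only [IntermediateField.adjoin_le_iff, Set.insert_subset_iff, Set.singleton_subset_iff,
      SetLike.mem_coe]
  · have hx : x ∈ IntermediateField.adjoin F {x, y, z} :=
      IntermediateField.subset_adjoin F _ (by simp)
    have hy : y ∈ IntermediateField.adjoin F {x, y, z} :=
      IntermediateField.subset_adjoin F _ (by simp)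
    have hz : z ∈ IntermediateField.adjoin F {x, y, z} :=
      IntermediateField.subset_adjoin F _ (by simp)
    exact ⟨sub_mem (sub_mem hy hz) (one_mem _), sub_mem (sub_mem hz hx) (one_mem _),
      sub_mem (sub_mem hx hy) (one_mem _)⟩
  · set E := IntermediateField.adjoin F {y - z - 1, z - x - 1, x - y - 1}
    have hyz : y - z - 1 ∈ E := IntermediateField.subset_adjoin F _ (by simp)
    have hzx : z - x - 1 ∈ E := IntermediateField.subset_adjoin F _ (by simp)
    have hxy : x - y - 1 ∈ E := IntermediateField.subset_adjoin F _ (by simp)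
    have hyzx : y + z + x = algebraMap F K a := (add_rotate x y z).symm.trans h
    have hzxy : z + x + y = algebraMap F K a := (add_rotate y z x).symm.trans hyzx
    exact ⟨mem_of_sum_eq_of_sub_mem h h3 hzx hxy, mem_of_sum_eq_of_sub_mem hyzx h3 hxy hyz,
      mem_of_sum_eq_of_sub_mem hzxy h3 hyz hzx⟩

end Field

theorem stmt18_general {F : Type*} (K : Type*) [Field F] [Field K] [Algebra F K] (a : F)
    (h3 : (3 : F) ≠ 0) (ha : ((simplestCubic a).map (algebraMap F K)).Splits) :
    (∃ r₁ r₂ r₃ : K,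
      (differenceCubic a).map (algebraMap F K) = (X - C r₁) * (X - C r₂) * (X - C r₃) ∧
      ((r₁ - r₂) * (r₁ - r₃) * (r₂ - r₃)) ^ 2 =
        (2 * algebraMap F K a + 3) ^ 2 *
          (algebraMap F K a ^ 2 + 3 * algebraMap F K a + 9) ^ 2) ∧
    IntermediateField.adjoin F ((differenceCubic a).rootSet K) =
      IntermediateField.adjoin F ((simplestCubic a).rootSet K) := by
  rw [simplestCubic_map] at ha
  obtain ⟨x, y, z, h⟩ := exists_isShanksCycle_of_splits ha
  refine ⟨⟨y - z - 1, z - x - 1, x - y - 1, ?_, ?_⟩, ?_⟩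
  · rw [differenceCubic_map, h.differenceCubic_eq]
  · rw [h.prod_sub_roots_differenceCubic, mul_pow]
  · rw [h.rootSet_differenceCubic, h.rootSet_simplestCubic, adjoin_sub_sub_one_eq h.sum_eq h3]

theorem f_eq_simplestCubic (m : ℤ) : f m = simplestCubic (m : ℚ) := rfl

theorem g_eq_differenceCubic (m : ℤ) : g m = differenceCubic (m : ℚ) := rfl

theorem stmt18 (m : ℤ) :
    (∃ r₁ r₂ r₃ : ℂ, (g m).map (algebraMap ℚ ℂ) = (X - C r₁) * (X - C r₂) * (X - C r₃) ∧
      ((r₁ - r₂) * (r₁ - r₃) * (r₂ - r₃)) ^ 2 =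
        (2 * (m : ℂ) + 3) ^ 2 * ((m : ℂ) ^ 2 + 3 * (m : ℂ) + 9) ^ 2) ∧
    IntermediateField.adjoin ℚ ((g m).rootSet (AlgebraicClosure ℚ)) = L m := by
  rw [L, f_eq_simplestCubic, g_eq_differenceCubic]
  exact ⟨by simpa using (stmt18_general ℂ (m : ℚ) three_ne_zero (IsAlgClosed.splits _)).1,
    (stmt18_general _ (m : ℚ) three_ne_zero (IsAlgClosed.splits _)).2⟩
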